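/- There exists a constant C > 0 such that for every symmetric tensor field k (a C^∞ map from ℝ³ to symmetric real 3×3 matrices, 1-periodic in the second and third variables) satisfying ∂_i ∂_j k_{ij} = 0 at all points of [0,1]×ℝ², and the boundary conditions k₁₁(x,y,z) = 0 and ∂₁k₁₁(x,y,z) + 2∂₂k₁₂(x,y,z) + 2∂₃k₁₃(x,y,z) = 0 whenever x ∈ {0,1}, one has ∫_Σ Σ_{i,j} ( k_{ij}² + Σ_l (∂_l k_{ij})² ) ≤ C [ ∫_Σ Σ_{i,j} k_{ij}² + ∫_Σ Σ_{i,j} (curl k)_{ij}² + ∫_Σ Σ_i (M k)_i² ]. -/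

import Mathlib

open MeasureTheory

/-- Partial derivative in the `i`-th coordinate direction (coordinates `x,y,z ↔ 0,1,2`). -/
noncomputable def pd (i : Fin 3) (f : (Fin 3 → ℝ) → ℝ) : (Fin 3 → ℝ) → ℝ :=
  fun p => fderiv ℝ f p (Pi.single i 1)

/-- 1-periodicity in the second and third variables. -/
def PerYZ (f : (Fin 3 → ℝ) → ℝ) : Prop :=
  ∀ p : Fin 3 → ℝ, f (p + Pi.single 1 1) = f p ∧ f (p + Pi.single 2 1) = f p

/-- The unit cube in `ℝ³`, the fundamental domain of `Σ = (0,1) × T²`. -/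
def Cube : Set (Fin 3 → ℝ) := Set.Icc 0 1

/-- The alternating symbol `ε_{ijk}` with `ε₀₁₂ = 1`. -/
noncomputable def epsR (i j k : Fin 3) : ℝ :=
  (((i : ℕ) : ℝ) - ((j : ℕ) : ℝ)) * (((j : ℕ) : ℝ) - ((k : ℕ) : ℝ))
    * (((k : ℕ) : ℝ) - ((i : ℕ) : ℝ)) / 2

/-- The curl of a symmetric tensor field: `(curl k)_{ij} = ½(ε_{abi}∂ₐk_{bj} + ε_{abj}∂ₐk_{bi})`. -/
noncomputable def curlT (k : Fin 3 → Fin 3 → (Fin 3 → ℝ) → ℝ) (i j : Fin 3) :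
    (Fin 3 → ℝ) → ℝ :=
  fun p => (∑ a, ∑ b, (epsR a b i * pd a (k b j) p + epsR a b j * pd a (k b i) p)) / 2

/-- The momentum operator `(M k)_i = ∂ᵢ(k_{jj}) - ∂ⱼ k_{ij}`. -/
noncomputable def momT (k : Fin 3 → Fin 3 → (Fin 3 → ℝ) → ℝ) (i : Fin 3) :
    (Fin 3 → ℝ) → ℝ :=
  fun p => ∑ j, (pd i (k j j) p - pd j (k i j) p)

/-- d l i j = ∂_l k_ij -/
theorem ptw_bound (d : Fin 3 → Fin 3 → Fin 3 → ℝ) (hd : ∀ l i j, d l i j = d l j i) (A : Fin 3 → Fin 3 → ℝ)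
  (hA0 : ∀ j, A 0 j = d 1 2 j - d 2 1 j) (hA1 : ∀ j, A 1 j = d 2 0 j - d 0 2 j) (hA2 : ∀ j, A 2 j = d 0 1 j - d 1 0 j)
  (D M G : Fin 3 → ℝ) (hD : ∀ i, D i = d 0 0 i + d 1 1 i + d 2 2 i)
  (hG : ∀ i, G i = d i 0 0 + d i 1 1 + d i 2 2) (hM : ∀ i, M i = G i - D i)
  (T : Fin 3 → ℝ) (hT : ∀ j, T j = d 1 2 j * d 2 1 j - d 2 2 j * d 1 1 j)
  (N1 N2 D0 : ℝ) (hN1 : N1 = d 1 0 0 * d 0 1 0 - d 0 0 0 * d 1 1 0)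
  (hN2 : N2 = d 2 0 0 * d 0 2 0 - d 0 0 0 * d 2 2 0)
  (hD0 : D0 = G 0 * D 0 + G 1 * D 1 + G 2 * D 2 + (d 0 1 1 + d 0 2 2) * (d 1 1 0 + d 2 2 0)
     - (d 1 1 1 + d 1 2 2) * d 0 1 0 - (d 2 1 1 + d 2 2 2) * d 0 2 0) :
  (∑ i, ∑ j, ∑ l, d l i j ^ 2) ≤ 20 * (∑ i, ∑ j, A i j ^ 2) + 2 * (M 0 ^2 + M 1 ^ 2 + M 2 ^ 2)
    + (4 * D0 + 12 * T 0 + 4 * T 1 + 4 * T 2 + 4 * N1 + 4 * N2) := by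
  have key : (∑ i, ∑ j, ∑ l, d l i j ^ 2) + (D 0 ^2 + D 1 ^ 2 + D 2 ^ 2) = (∑ i, ∑ j, A i j ^ 2)
     - 2 * (D 0 * M 0 + D 1 * M 1 + D 2 * M 2) + (2 * D0 + 6 * T 0 + 2 * T 1 + 2 * T 2 + 2 * N1 + 2 * N2)
     + 2 * (A 2 2 * d 2 1 0 - A 1 1 * d 1 2 0 - A 2 1 * d 2 2 0 + A 1 2 * d 1 1 0
       - (-A 0 2) * d 0 1 0 - (A 0 1) * d 0 2 0) := by
    simp only [Fin.sum_univ_three, hA0, hA1, hA2, hD0, hT, hN1, hN2, hM]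
    simp only [hD, hG]
    rw [hd 0 1 0, hd 0 2 0, hd 0 2 1, hd 1 1 0, hd 1 2 0, hd 1 2 1, hd 2 1 0, hd 2 2 0, hd 2 2 1]
    ring
  have h2 : 2 * (A 2 2 * d 2 1 0 - A 1 1 * d 1 2 0 - A 2 1 * d 2 2 0 + A 1 2 * d 1 1 0
       - (-A 0 2) * d 0 1 0 - (A 0 1) * d 0 2 0) ≤ 8 * (∑ i, ∑ j, A i j ^ 2) + (1/2) * (∑ i, ∑ j, ∑ l, d l i j ^ 2) := by
    simp only [Fin.sum_univ_three]
    have e1 := sq_nonneg (2 * A 2 2 - d 2 1 0)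
    have e2 := sq_nonneg (2 * A 1 1 + d 1 2 0)
    have e3 := sq_nonneg (2 * A 2 1 + d 2 2 0)
    have e4 := sq_nonneg (2 * A 1 2 - d 1 1 0)
    have e5 := sq_nonneg (2 * A 0 2 - d 0 1 0)
    have e6 := sq_nonneg (2 * A 0 1 + d 0 2 0)
    have p := fun i j => sq_nonneg (A i j)
    have q := fun l i j => sq_nonneg (d l i j)
    linarith [p 0 0, p 0 1, p 0 2, p 1 0, p 1 1, p 1 2, p 2 0, p 2 1, p 2 2,
      q 0 0 0, q 0 0 1, q 0 0 2, q 0 1 0, q 0 1 1, q 0 1 2, q 0 2 0, q 0 2 1, q 0 2 2,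
      q 1 0 0, q 1 0 1, q 1 0 2, q 1 1 0, q 1 1 1, q 1 1 2, q 1 2 0, q 1 2 1, q 1 2 2,
      q 2 0 0, q 2 0 1, q 2 0 2, q 2 1 0, q 2 1 1, q 2 1 2, q 2 2 0, q 2 2 1, q 2 2 2]
  have h3 : - 2 * (D 0 * M 0 + D 1 * M 1 + D 2 * M 2) ≤ (D 0 ^2 + D 1 ^ 2 + D 2 ^ 2) + (M 0 ^2 + M 1 ^ 2 + M 2 ^ 2) := by
    nlinarith [sq_nonneg (D 0 + M 0), sq_nonneg (D 1 + M 1), sq_nonneg (D 2 + M 2)]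
  have h4 : 0 ≤ ∑ i, ∑ j, A i j ^ 2 := by positivity
  linarith

theorem curl_split (A S : Fin 3 → Fin 3 → ℝ) (M : Fin 3 → ℝ)
    (hS : ∀ i j, S i j = (A i j + A j i) / 2)
    (hM0 : M 0 = -(A 1 2 - A 2 1)) (hM1 : M 1 = -(A 2 0 - A 0 2)) (hM2 : M 2 = -(A 0 1 - A 1 0)) :
    (∑ i, ∑ j, A i j ^ 2) = (∑ i, ∑ j, S i j ^ 2) + (1 / 2) * ∑ i, M i ^ 2 := by
  simp only [Fin.sum_univ_three, hS, hM0, hM1, hM2]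
  ring

theorem pd_smooth {f : (Fin 3 → ℝ) → ℝ} (hf : ContDiff ℝ (⊤ : ℕ∞) f) (i : Fin 3) :
    ContDiff ℝ (⊤ : ℕ∞) (pd i f) := by
  unfold pd
  exact (hf.fderiv_right (m := (⊤ : ℕ∞)) (by simp)).clm_apply contDiff_const

theorem pd_diff {f : (Fin 3 → ℝ) → ℝ} (hf : ContDiff ℝ (⊤ : ℕ∞) f) : Differentiable ℝ f :=
  hf.differentiable (by simp)

theorem pd_add {f g : (Fin 3 → ℝ) → ℝ} (hf : ContDiff ℝ (⊤ : ℕ∞) f)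
    (hg : ContDiff ℝ (⊤ : ℕ∞) g) (i : Fin 3) (p : Fin 3 → ℝ) :
    pd i (fun q => f q + g q) p = pd i f p + pd i g p := by
  unfold pd
  rw [fderiv_fun_add (pd_diff hf p) (pd_diff hg p)]; rfl

theorem pd_sub {f g : (Fin 3 → ℝ) → ℝ} (hf : ContDiff ℝ (⊤ : ℕ∞) f)
    (hg : ContDiff ℝ (⊤ : ℕ∞) g) (i : Fin 3) (p : Fin 3 → ℝ) :
    pd i (fun q => f q - g q) p = pd i f p - pd i g p := by
  unfold pd
  rw [fderiv_fun_sub (pd_diff hf p) (pd_diff hg p)]; rfl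

theorem pd_mul {f g : (Fin 3 → ℝ) → ℝ} (hf : ContDiff ℝ (⊤ : ℕ∞) f)
    (hg : ContDiff ℝ (⊤ : ℕ∞) g) (i : Fin 3) (p : Fin 3 → ℝ) :
    pd i (fun q => f q * g q) p = pd i f p * g p + f p * pd i g p := by
  unfold pd
  rw [fderiv_fun_mul (pd_diff hf p) (pd_diff hg p)]
  simp; ring

theorem pd_comm {f : (Fin 3 → ℝ) → ℝ} (hf : ContDiff ℝ (⊤ : ℕ∞) f) (i j : Fin 3)
    (p : Fin 3 → ℝ) : pd i (pd j f) p = pd j (pd i f) p := by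
  have hd : Differentiable ℝ (fderiv ℝ f) :=
    (hf.fderiv_right (m := (⊤ : ℕ∞)) (by simp)).differentiable (by simp)
  have h (a b : Fin 3) : pd a (pd b f) p =
      fderiv ℝ (fderiv ℝ f) p (Pi.single a 1) (Pi.single b 1) := by
    unfold pd
    rw [fderiv_clm_apply (hd p) (differentiableAt_const _)]
    simp
  rw [h, h]
  have := (hf.contDiffAt (x := p)).isSymmSndFDerivAt
    (by simp only [minSmoothness_of_isRCLikeNormedField]; exact WithTop.coe_le_coe.2 le_top)
  exact this _ _

theorem pd_per {f : (Fin 3 → ℝ) → ℝ} (hf : PerYZ f) (i : Fin 3) : PerYZ (pd i f) := by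
  have h (v : Fin 3 → ℝ) (hv : ∀ p, f (p + v) = f p) (p : Fin 3 → ℝ) :
      pd i f (p + v) = pd i f p := by
    unfold pd
    rw [← fderiv_comp_add_right]
    simp only [hv]
  exact fun p => ⟨h _ (fun q => (hf q).1) p, h _ (fun q => (hf q).2) p⟩

theorem cube_integrable {f : (Fin 3 → ℝ) → ℝ} (hf : Continuous f) : IntegrableOn f Cube :=
  hf.continuousOn.integrableOn_compact isCompact_Icc

theorem divg_zero (F : Fin 3 → (Fin 3 → ℝ) → ℝ) (hF : ∀ i, ContDiff ℝ (⊤ : ℕ∞) (F i))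
    (h0 : ∀ p : Fin 3 → ℝ, p 0 = 0 ∨ p 0 = 1 → F 0 p = 0)
    (h1 : PerYZ (F 1)) (h2 : PerYZ (F 2)) :
    ∫ p in Cube, (pd 0 (F 0) p + pd 1 (F 1) p + pd 2 (F 2) p) = 0 := by
  have hc : Continuous fun p => ∑ i, fderiv ℝ (F i) p (Pi.single i 1) :=
    continuous_finsetSum _ fun i _ => (pd_smooth (hF i) i).continuous
  have := integral_divergence_of_hasFDerivAt_off_countable' (0 : Fin 3 → ℝ) 1
    (by intro i; simp) F (fun i => fderiv ℝ (F i)) ∅ (by simp)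
    (fun i => (hF i).continuous.continuousOn)
    (fun x _ i => (pd_diff (hF i) x).hasFDerivAt) (cube_integrable hc)
  have e : ∀ p, (pd 0 (F 0) p + pd 1 (F 1) p + pd 2 (F 2) p)
      = ∑ i, fderiv ℝ (F i) p (Pi.single i 1) := by
    intro p; rw [Fin.sum_univ_three]; rfl
  simp only [e]
  unfold Cube
  rw [this, Fin.sum_univ_three]
  have g (i : Fin 3) (x : Fin 2 → ℝ) : (i.insertNth ((1 : Fin 3 → ℝ) i) x : Fin 3 → ℝ)
      = (i.insertNth ((0 : Fin 3 → ℝ) i) x : Fin 3 → ℝ) + Pi.single i 1 := by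
    funext j
    refine Fin.succAboveCases i ?_ (fun m => ?_) j <;> simp
  have q0 (x : Fin 2 → ℝ) : F 0 ((0 : Fin 3).insertNth ((1 : Fin 3 → ℝ) 0) x) = 0 :=
    h0 _ (Or.inr (by simp))
  have q0' (x : Fin 2 → ℝ) : F 0 ((0 : Fin 3).insertNth ((0 : Fin 3 → ℝ) 0) x) = 0 :=
    h0 _ (Or.inl (by simp))
  simp only [q0, q0', g 1, g 2, (h1 _).1, (h2 _).2]
  simp

theorem tang_zero (f g : (Fin 3 → ℝ) → ℝ) (hf : ContDiff ℝ (⊤ : ℕ∞) f)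
    (hg : ContDiff ℝ (⊤ : ℕ∞) g) (pf : PerYZ f) (pg : PerYZ g) :
    ∫ p in Cube, (pd 1 f p * pd 2 g p - pd 2 f p * pd 1 g p) = 0 := by
  have := divg_zero ![fun _ => 0, fun q => f q * pd 2 g q, fun q => (fun _ => 0) q - f q * pd 1 g q] ?_ ?_ ?_ ?_
  · rw [← this]
    congr 1; funext p
    simp only [Matrix.cons_val]
    rw [pd_mul hf (pd_smooth hg 2), pd_sub contDiff_const (hf.mul (pd_smooth hg 1)),
      pd_mul hf (pd_smooth hg 1), pd_comm hg 1 2]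
    simp [pd]; ring
  · intro i; fin_cases i
    · exact contDiff_const
    · exact hf.mul (pd_smooth hg 2)
    · exact contDiff_const.sub (hf.mul (pd_smooth hg 1))
  · intro p _; rfl
  · intro p
    simp [(pf p).1, (pf p).2, (pd_per pg 2 p).1, (pd_per pg 2 p).2]
  · intro p
    simp [(pf p).1, (pf p).2, (pd_per pg 1 p).1, (pd_per pg 1 p).2]

theorem gen_zero (t s u1 u2 v0 v1 v2 : (Fin 3 → ℝ) → ℝ) (ht : ContDiff ℝ (⊤ : ℕ∞) t)
    (hs : ContDiff ℝ (⊤ : ℕ∞) s) (hu1 : ContDiff ℝ (⊤ : ℕ∞) u1) (hu2 : ContDiff ℝ (⊤ : ℕ∞) u2)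
    (hv0 : ContDiff ℝ (⊤ : ℕ∞) v0) (hv1 : ContDiff ℝ (⊤ : ℕ∞) v1) (hv2 : ContDiff ℝ (⊤ : ℕ∞) v2)
    (pt : PerYZ t) (ps : PerYZ s) (pu1 : PerYZ u1) (pu2 : PerYZ u2)
    (pv1 : PerYZ v1) (pv2 : PerYZ v2)
    (hdiv : ∀ p ∈ Cube, pd 0 v0 p + pd 1 v1 p + pd 2 v2 p = 0)
    (hb : ∀ p : Fin 3 → ℝ, p 0 = 0 ∨ p 0 = 1 → t p * v0 p + s p * (pd 1 u1 p + pd 2 u2 p) = 0) :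
    ∫ p in Cube, (pd 0 t p * v0 p + pd 1 t p * v1 p + pd 2 t p * v2 p
      + pd 0 s p * (pd 1 u1 p + pd 2 u2 p) - pd 1 s p * pd 0 u1 p - pd 2 s p * pd 0 u2 p) = 0 := by
  have := divg_zero ![fun q => t q * v0 q + s q * (pd 1 u1 q + pd 2 u2 q),
    fun q => t q * v1 q - s q * pd 0 u1 q, fun q => t q * v2 q - s q * pd 0 u2 q] ?_ ?_ ?_ ?_
  · rw [← this]
    apply setIntegral_congr_fun measurableSet_Icc
    intro p hp
    simp only [Matrix.cons_val]
    rw [pd_add (ht.mul hv0) (hs.mul ((pd_smooth hu1 1).add (pd_smooth hu2 2))),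
      pd_sub (ht.mul hv1) (hs.mul (pd_smooth hu1 0)),
      pd_sub (ht.mul hv2) (hs.mul (pd_smooth hu2 0)),
      pd_mul ht hv0, pd_mul hs ((pd_smooth hu1 1).add (pd_smooth hu2 2)),
      pd_mul ht hv1, pd_mul ht hv2, pd_mul hs (pd_smooth hu1 0), pd_mul hs (pd_smooth hu2 0),
      pd_add (pd_smooth hu1 1) (pd_smooth hu2 2), pd_comm hu1 1 0, pd_comm hu2 2 0]
    linear_combination (-t p) * hdiv p hp
  · intro i; fin_cases i
    · exact (ht.mul hv0).add (hs.mul ((pd_smooth hu1 1).add (pd_smooth hu2 2)))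
    · exact (ht.mul hv1).sub (hs.mul (pd_smooth hu1 0))
    · exact (ht.mul hv2).sub (hs.mul (pd_smooth hu2 0))
  · intro p hp; exact hb p hp
  · intro p
    simp [(pt p).1, (pt p).2, (ps p).1, (ps p).2, (pv1 p).1, (pv1 p).2,
      (pd_per pu1 0 p).1, (pd_per pu1 0 p).2]
  · intro p
    simp [(pt p).1, (pt p).2, (ps p).1, (ps p).2, (pv2 p).1, (pv2 p).2,
      (pd_per pu2 0 p).1, (pd_per pu2 0 p).2]

theorem per_add {f g : (Fin 3 → ℝ) → ℝ} (hf : PerYZ f) (hg : PerYZ g) :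
    PerYZ (fun q => f q + g q) := fun p => by
  simp [(hf p).1, (hf p).2, (hg p).1, (hg p).2]

/-- The key estimate for gauge-fixed extrinsic curvatures: there is
`C > 0` such that for every symmetric smooth periodic tensor field `k` with
`∂ᵢ∂ⱼk_{ij} = 0` on `[0,1] × ℝ²` and the boundary conditions `k₁₁ = 0` and
`∂₁k₁₁ + 2∂₂k₁₂ + 2∂₃k₁₃ = 0` on the faces `x ∈ {0,1}`, the `H¹` norm of `k` is
controlled by the `L²` norms of `k`, `curl k` and `M k`. -/
theorem stmt13 :
    ∃ C : ℝ, 0 < C ∧ ∀ k : Fin 3 → Fin 3 → (Fin 3 → ℝ) → ℝ,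
      (∀ i j, k i j = k j i) →
      (∀ i j, ContDiff ℝ (⊤ : ℕ∞) (k i j)) →
      (∀ i j, PerYZ (k i j)) →
      (∀ p : Fin 3 → ℝ, p 0 ∈ Set.Icc (0 : ℝ) 1 → ∑ i, ∑ j, pd i (pd j (k i j)) p = 0) →
      (∀ p : Fin 3 → ℝ, p 0 = 0 ∨ p 0 = 1 →
        k 0 0 p = 0 ∧ pd 0 (k 0 0) p + 2 * pd 1 (k 0 1) p + 2 * pd 2 (k 0 2) p = 0) →
      (∫ p in Cube, ∑ i, ∑ j, ((k i j p) ^ 2 + ∑ l, (pd l (k i j) p) ^ 2)) ≤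
        C * ((∫ p in Cube, ∑ i, ∑ j, (k i j p) ^ 2)
          + (∫ p in Cube, ∑ i, ∑ j, (curlT k i j p) ^ 2)
          + (∫ p in Cube, ∑ i, (momT k i p) ^ 2)) := by
  refine ⟨100, by norm_num, ?_⟩
  intro k hsym hk hp hdd hbc
  have hcd : ∀ l i j, Continuous (pd l (k i j)) := fun l i j => (pd_smooth (hk i j) l).continuous
  have hck : ∀ i j, Continuous (k i j) := fun i j => (hk i j).continuous
  have zc : ContDiff ℝ (⊤ : ℕ∞) (fun _ : Fin 3 → ℝ => (0 : ℝ)) := contDiff_const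
  have zp : PerYZ (fun _ => 0) := fun _ => ⟨rfl, rfl⟩
  have zpd : ∀ i p, pd i (fun _ => 0) p = 0 := by intro i p; simp [pd]
  -- tangential null Lagrangians
  have T : ∀ j, ∫ p in Cube, (pd 1 (k 2 j) p * pd 2 (k 1 j) p - pd 2 (k 2 j) p * pd 1 (k 1 j) p) = 0 :=
    fun j => tang_zero _ _ (hk 2 j) (hk 1 j) (hp 2 j) (hp 1 j)
  have N1 : ∫ p in Cube, (pd 1 (k 0 0) p * pd 0 (k 1 0) p - pd 0 (k 0 0) p * pd 1 (k 1 0) p) = 0 := by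
    have := gen_zero (fun _ => 0) (k 0 0) (k 1 0) (fun _ => 0) (fun _ => 0) (fun _ => 0) (fun _ => 0)
      zc (hk 0 0) (hk 1 0) zc zc zc zc zp (hp 0 0) (hp 1 0) zp zp zp (by simp [zpd])
      (fun p h => by simp [(hbc p h).1])
    rw [← neg_eq_zero, ← integral_neg, ← this]
    congr 1; funext p; simp only [zpd]; ring
  have N2 : ∫ p in Cube, (pd 2 (k 0 0) p * pd 0 (k 2 0) p - pd 0 (k 0 0) p * pd 2 (k 2 0) p) = 0 := by
    have := gen_zero (fun _ => 0) (k 0 0) (fun _ => 0) (k 2 0) (fun _ => 0) (fun _ => 0) (fun _ => 0)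
      zc (hk 0 0) zc (hk 2 0) zc zc zc zp (hp 0 0) zp (hp 2 0) zp zp (by simp [zpd])
      (fun p h => by simp [(hbc p h).1])
    rw [← neg_eq_zero, ← integral_neg, ← this]
    congr 1; funext p; simp only [zpd]; ring
  set D : Fin 3 → (Fin 3 → ℝ) → ℝ := fun i q => pd 0 (k 0 i) q + pd 1 (k 1 i) q + pd 2 (k 2 i) q with hD
  set G : Fin 3 → (Fin 3 → ℝ) → ℝ := fun i q => pd i (k 0 0) q + pd i (k 1 1) q + pd i (k 2 2) q with hG
  have hDs : ∀ i, ContDiff ℝ (⊤ : ℕ∞) (D i) := fun i =>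
    ((pd_smooth (hk 0 i) 0).add (pd_smooth (hk 1 i) 1)).add (pd_smooth (hk 2 i) 2)
  have hDp : ∀ i, PerYZ (D i) := fun i =>
    per_add (per_add (pd_per (hp 0 i) 0) (pd_per (hp 1 i) 1)) (pd_per (hp 2 i) 2)
  have hpdD : ∀ l i p, pd l (D i) p = pd l (pd 0 (k 0 i)) p + pd l (pd 1 (k 1 i)) p
      + pd l (pd 2 (k 2 i)) p := by
    intro l i p
    simp only [hD]
    rw [pd_add ((pd_smooth (hk 0 i) 0).add (pd_smooth (hk 1 i) 1)) (pd_smooth (hk 2 i) 2),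
      pd_add (pd_smooth (hk 0 i) 0) (pd_smooth (hk 1 i) 1)]
  have D0 : ∫ p in Cube, (G 0 p * D 0 p + G 1 p * D 1 p + G 2 p * D 2 p
      + (pd 0 (k 1 1) p + pd 0 (k 2 2) p) * (pd 1 (k 1 0) p + pd 2 (k 2 0) p)
      - (pd 1 (k 1 1) p + pd 1 (k 2 2) p) * pd 0 (k 1 0) p
      - (pd 2 (k 1 1) p + pd 2 (k 2 2) p) * pd 0 (k 2 0) p) = 0 := by
    have := gen_zero (fun q => k 0 0 q + k 1 1 q + k 2 2 q) (fun q => k 1 1 q + k 2 2 q) (k 1 0) (k 2 0)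
      (D 0) (D 1) (D 2) (((hk 0 0).add (hk 1 1)).add (hk 2 2)) ((hk 1 1).add (hk 2 2)) (hk 1 0) (hk 2 0)
      (hDs 0) (hDs 1) (hDs 2) (per_add (per_add (hp 0 0) (hp 1 1)) (hp 2 2)) (per_add (hp 1 1) (hp 2 2))
      (hp 1 0) (hp 2 0) (hDp 1) (hDp 2) ?_ ?_
    · rw [← this]
      congr 1; funext p
      simp only [pd_add ((hk 0 0).add (hk 1 1)) (hk 2 2), pd_add (hk 0 0) (hk 1 1),
        pd_add (hk 1 1) (hk 2 2), hG]
    · intro p hpc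
      have := hdd p ⟨hpc.1 0, hpc.2 0⟩
      simp only [Fin.sum_univ_three] at this
      simp only [hpdD]
      rw [hsym 1 0, hsym 2 0, hsym 2 1] at *
      linarith
    · intro p hpb
      obtain ⟨b1, b2⟩ := hbc p hpb
      simp only [hD, b1]
      rw [hsym 1 0, hsym 2 0]
      linear_combination (k 1 1 p + k 2 2 p) * b2
  -- total null Lagrangian
  set Z : (Fin 3 → ℝ) → ℝ := fun p => 4 * (G 0 p * D 0 p + G 1 p * D 1 p + G 2 p * D 2 p
      + (pd 0 (k 1 1) p + pd 0 (k 2 2) p) * (pd 1 (k 1 0) p + pd 2 (k 2 0) p)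
      - (pd 1 (k 1 1) p + pd 1 (k 2 2) p) * pd 0 (k 1 0) p
      - (pd 2 (k 1 1) p + pd 2 (k 2 2) p) * pd 0 (k 2 0) p)
    + 12 * (pd 1 (k 2 0) p * pd 2 (k 1 0) p - pd 2 (k 2 0) p * pd 1 (k 1 0) p)
    + 4 * (pd 1 (k 2 1) p * pd 2 (k 1 1) p - pd 2 (k 2 1) p * pd 1 (k 1 1) p)
    + 4 * (pd 1 (k 2 2) p * pd 2 (k 1 2) p - pd 2 (k 2 2) p * pd 1 (k 1 2) p)
    + 4 * (pd 1 (k 0 0) p * pd 0 (k 1 0) p - pd 0 (k 0 0) p * pd 1 (k 1 0) p)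
    + 4 * (pd 2 (k 0 0) p * pd 0 (k 2 0) p - pd 0 (k 0 0) p * pd 2 (k 2 0) p) with hZ
  have hcD : ∀ i, Continuous (D i) := fun i => (hDs i).continuous
  have hcG : ∀ i, Continuous (G i) := fun i => ((hcd i 0 0).add (hcd i 1 1)).add (hcd i 2 2)
  have hcZ : Continuous Z := by fun_prop
  have hZ0 : ∫ p in Cube, Z p = 0 := by
    simp only [hZ]
    rw [integral_add, integral_add, integral_add, integral_add, integral_add]
    · simp only [integral_const_mul, D0, T, N1, N2]; norm_num
    all_goals (apply cube_integrable; fun_prop)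
  have hcS : ∀ i j, Continuous (curlT k i j) := by intro i j; unfold curlT; fun_prop
  have hcM : ∀ i, Continuous (momT k i) := by intro i; unfold momT; fun_prop
  have pw : ∀ p, (∑ i, ∑ j, ((k i j p) ^ 2 + ∑ l, (pd l (k i j) p) ^ 2)) ≤
      100 * ((∑ i, ∑ j, (k i j p) ^ 2) + (∑ i, ∑ j, (curlT k i j p) ^ 2) + (∑ i, (momT k i p) ^ 2)) + Z p := by
    intro p
    set A : Fin 3 → Fin 3 → ℝ := ![fun j => pd 1 (k 2 j) p - pd 2 (k 1 j) p,
      fun j => pd 2 (k 0 j) p - pd 0 (k 2 j) p, fun j => pd 0 (k 1 j) p - pd 1 (k 0 j) p] with hA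
    have h1 := ptw_bound (fun l i j => pd l (k i j) p) (fun l i j => by rw [hsym]) A
      (fun _ => rfl) (fun _ => rfl) (fun _ => rfl) (fun i => D i p) (fun i => momT k i p) (fun i => G i p)
      (fun _ => rfl) (fun _ => rfl)
      (fun i => by
        simp only [momT, Fin.sum_univ_three, hD, hG]
        rw [hsym 0 i, hsym 1 i, hsym 2 i]; ring)
      _ (fun _ => rfl) _ _ _ rfl rfl rfl
    have h2 := curl_split A (fun i j => curlT k i j p) (fun i => momT k i p)
      (fun i j => by
        fin_cases i <;> fin_cases j <;>
        simp [curlT, hA, Fin.sum_univ_three, epsR] <;> ring)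
      (by simp [momT, hA, Fin.sum_univ_three, hsym 1 0, hsym 2 0, hsym 2 1]; ring)
      (by simp [momT, hA, Fin.sum_univ_three, hsym 1 0, hsym 2 0, hsym 2 1]; ring)
      (by simp [momT, hA, Fin.sum_univ_three, hsym 1 0, hsym 2 0, hsym 2 1]; ring)
    have h3 : (∑ i, ∑ j, ((k i j p) ^ 2 + ∑ l, (pd l (k i j) p) ^ 2))
        = (∑ i, ∑ j, (k i j p) ^ 2) + ∑ i, ∑ j, ∑ l, (pd l (k i j) p) ^ 2 := by
      simp only [Finset.sum_add_distrib]
    have q1 : 0 ≤ ∑ i, ∑ j, (k i j p) ^ 2 := by positivity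
    have q2 : 0 ≤ ∑ i, ∑ j, (curlT k i j p) ^ 2 := by positivity
    have q3 : 0 ≤ ∑ i, (momT k i p) ^ 2 := by positivity
    have q4 : momT k 0 p ^ 2 + momT k 1 p ^ 2 + momT k 2 p ^ 2 = ∑ i, (momT k i p) ^ 2 := by
      rw [Fin.sum_univ_three]
    rw [h3]
    rw [h2, q4] at h1
    simp only [hZ]
    linarith
  have I1 : IntegrableOn (fun p => ∑ i, ∑ j, (k i j p) ^ 2) Cube := by
    apply cube_integrable; fun_prop
  have I2 : IntegrableOn (fun p => ∑ i, ∑ j, (curlT k i j p) ^ 2) Cube := by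
    apply cube_integrable; fun_prop
  have I3 : IntegrableOn (fun p => ∑ i, (momT k i p) ^ 2) Cube := by
    apply cube_integrable; fun_prop
  have I0 : IntegrableOn (fun p => ∑ i, ∑ j, ((k i j p) ^ 2 + ∑ l, (pd l (k i j) p) ^ 2)) Cube := by
    apply cube_integrable; fun_prop
  have IZ : IntegrableOn Z Cube := cube_integrable hcZ
  have fin := integral_mono I0 (((I1.add I2).add I3).const_mul 100 |>.add IZ) pw
  have e : ∫ p in Cube, (100 * ((∑ i, ∑ j, (k i j p) ^ 2) + (∑ i, ∑ j, (curlT k i j p) ^ 2)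
      + (∑ i, (momT k i p) ^ 2)) + Z p) = 100 * ((∫ p in Cube, ∑ i, ∑ j, (k i j p) ^ 2)
          + (∫ p in Cube, ∑ i, ∑ j, (curlT k i j p) ^ 2)
          + (∫ p in Cube, ∑ i, (momT k i p) ^ 2)) := by
    have I12 : IntegrableOn (fun p => (∑ i, ∑ j, (k i j p) ^ 2)
        + (∑ i, ∑ j, (curlT k i j p) ^ 2)) Cube := I1.add I2
    have I123 : IntegrableOn (fun p => (∑ i, ∑ j, (k i j p) ^ 2)
        + (∑ i, ∑ j, (curlT k i j p) ^ 2) + (∑ i, (momT k i p) ^ 2)) Cube := I12.add I3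
    rw [integral_add (I123.const_mul 100) IZ, hZ0, integral_const_mul,
      integral_add I12 I3, integral_add I1 I2, add_zero]
  exact fin.trans_eq e
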